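/- (IAG, non-convex case, deterministic.) Fix integers τ ≥ 1 and K ≥ 2τ, and set α = 1/(16 L τ). If the (deterministic) sampling sequence has staleness bounded by τ up to horizon K, then, without any convexity assumption on f, the IAG iterates (driven by the SAG direction) satisfy (1/(K − τ)) · Σ_{k=τ}^{K−1} ‖∇f(x_k)‖² ≤ 768 L² B² τ / K. -/

import Mathlib

/-!
A step of size `α` along an inexact gradient `g` decreases an `L`-smooth function by at least
`α / 2 * ‖∇ f x‖ ^ 2 + α / 2 * (1 - α L) * ‖g‖ ^ 2 - α / 2 * ‖g - ∇ f x‖ ^ 2`. The IAG direction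
is the mean of gradients taken at most `τ` steps ago, so its error is at most `α L` times the sum
of the `τ` most recent values of `‖g‖`. By Cauchy–Schwarz, and because each `‖g j‖` occurs in at
most `τ` of these windows, the squared errors sum to at most `(α L τ) ^ 2 * ∑ ‖g j‖ ^ 2`; the
descent terms absorb all of it except the contribution of the first `τ` directions. During the
first `τ` steps the iterates cannot leave the ball of radius `B` around the starting point, which
bounds both these directions and `f (x τ) - f xstar`.
-/

open Finset InnerProductSpace
open scoped Gradient

section Windows

lemma sum_Ico_sum_Ico_sub_le {a : ℕ → ℝ} (ha : ∀ k, 0 ≤ a k) (m τ K : ℕ) :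
    ∑ k ∈ Ico m K, ∑ j ∈ Ico (k - τ) k, a j ≤ τ * ∑ j ∈ range K, a j := by
  have swap : ∑ k ∈ Ico m K, ∑ j ∈ Ico (k - τ) k, a j
      = ∑ j ∈ range K, ∑ k ∈ Ico m K with k ∈ Ioc j (j + τ), a j := by
    refine sum_comm' fun k j => ?_
    simp only [mem_Ico, mem_filter, mem_Ioc, mem_range]
    omega
  have card_le (j : ℕ) : #{k ∈ Ico m K | k ∈ Ioc j (j + τ)} ≤ τ := by
    calc #{k ∈ Ico m K | k ∈ Ioc j (j + τ)} ≤ #(Ioc j (j + τ)) :=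
          card_le_card fun k hk => (mem_filter.1 hk).2
      _ = τ := by simp
  rw [swap, mul_sum]
  refine sum_le_sum fun j _ => ?_
  rw [sum_const, nsmul_eq_mul]
  exact mul_le_mul_of_nonneg_right (mod_cast card_le j) (ha j)

lemma sum_sq_le_of_le_mul_window_sum {a e : ℕ → ℝ} {c : ℝ} {m τ K : ℕ} (he : ∀ k, 0 ≤ e k)
    (h : ∀ k ∈ Ico m K, e k ≤ c * ∑ j ∈ Ico (k - τ) k, a j) :
    ∑ k ∈ Ico m K, e k ^ 2 ≤ (c * τ) ^ 2 * ∑ j ∈ range K, a j ^ 2 := by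
  have cauchy_schwarz (k : ℕ) :
      (∑ j ∈ Ico (k - τ) k, a j) ^ 2 ≤ τ * ∑ j ∈ Ico (k - τ) k, a j ^ 2 := by
    refine sq_sum_le_card_mul_sum_sq.trans ?_
    gcongr
    rw [Nat.card_Ico]
    omega
  calc ∑ k ∈ Ico m K, e k ^ 2
      ≤ ∑ k ∈ Ico m K, c ^ 2 * (τ * ∑ j ∈ Ico (k - τ) k, a j ^ 2) := by
        refine sum_le_sum fun k hk => (pow_le_pow_left₀ (he k) (h k hk) 2).trans ?_
        rw [mul_pow]
        exact mul_le_mul_of_nonneg_left (cauchy_schwarz k) (sq_nonneg c)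
    _ = c ^ 2 * (τ * ∑ k ∈ Ico m K, ∑ j ∈ Ico (k - τ) k, a j ^ 2) := by simp only [mul_sum]
    _ ≤ c ^ 2 * (τ * (τ * ∑ j ∈ range K, a j ^ 2)) := by
        gcongr
        exact sum_Ico_sum_Ico_sub_le (fun j => sq_nonneg (a j)) m τ K
    _ = (c * τ) ^ 2 * ∑ j ∈ range K, a j ^ 2 := by ring

end Windows

lemma norm_inv_card_smul_sum_le {ι E : Type*} [Fintype ι] [Nonempty ι] [SeminormedAddCommGroup E]
    [NormedSpace ℝ E] {u : ι → E} {C : ℝ} (hu : ∀ i, ‖u i‖ ≤ C) :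
    ‖(Fintype.card ι : ℝ)⁻¹ • ∑ i, u i‖ ≤ C := by
  rw [norm_smul, norm_inv, Real.norm_natCast, inv_mul_le_iff₀ (mod_cast Fintype.card_pos)]
  simpa using norm_sum_le_of_le univ fun i _ => hu i

lemma norm_sub_le_mul_sum_Ico {E : Type*} [SeminormedAddCommGroup E] [NormedSpace ℝ E]
    {x g : ℕ → E} {α : ℝ} (hα : 0 ≤ α) (hx : ∀ k, x (k + 1) = x k - α • g k) {m n : ℕ}
    (hmn : m ≤ n) : ‖x m - x n‖ ≤ α * ∑ k ∈ Ico m n, ‖g k‖ := by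
  have step (k : ℕ) : ‖x k - x (k + 1)‖ = α * ‖g k‖ := by
    rw [hx, sub_sub_cancel, norm_smul, Real.norm_of_nonneg hα]
  simpa only [dist_eq_norm, step, mul_sum] using dist_le_Ico_sum_dist x hmn

variable {E : Type*} [NormedAddCommGroup E] [InnerProductSpace ℝ E] [CompleteSpace E]

section Smooth

lemma gradient_eq_zero_of_forall_le {f : E → ℝ} {z : E} (hz : ∀ y, f z ≤ f y) : ∇ f z = 0 := by
  have hmin : IsLocalMin f z := Filter.Eventually.of_forall hz
  rw [gradient, hmin.fderiv_eq_zero, map_zero]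

/-- `L`-smoothness in the sense of optimization: `f` is differentiable with `L`-Lipschitz gradient.
Differentiability is demanded separately because `∇ f` is `0` where `f` is not differentiable. -/
structure LSmooth (L : ℝ) (f : E → ℝ) : Prop where
  differentiable : Differentiable ℝ f
  norm_gradient_sub_le : ∀ y z, ‖∇ f y - ∇ f z‖ ≤ L * ‖y - z‖

namespace LSmooth

variable {L α : ℝ} {f : E → ℝ} {x g : ℕ → E}

lemma inner_gradient_sub_le (hf : LSmooth L f) (z v : E) {t : ℝ} (ht : 0 ≤ t) :
    ⟪∇ f (z + t • v) - ∇ f z, v⟫_ℝ ≤ L * ‖v‖ ^ 2 * t :=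
  calc ⟪∇ f (z + t • v) - ∇ f z, v⟫_ℝ
      ≤ ‖∇ f (z + t • v) - ∇ f z‖ * ‖v‖ := real_inner_le_norm _ _
    _ ≤ L * ‖z + t • v - z‖ * ‖v‖ := by gcongr; exact hf.norm_gradient_sub_le _ _
    _ = L * ‖v‖ ^ 2 * t := by
        rw [add_sub_cancel_left, norm_smul, Real.norm_of_nonneg ht]
        ring

lemma le_add_inner_add_sq (hf : LSmooth L f) (z v : E) :
    f (z + v) ≤ f z + ⟪∇ f z, v⟫_ℝ + L / 2 * ‖v‖ ^ 2 := by
  let φ (t : ℝ) : ℝ := f (z + t • v) - t * ⟪∇ f z, v⟫_ℝ - L / 2 * ‖v‖ ^ 2 * t ^ 2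
  have hasDerivAt_φ (t : ℝ) :
      HasDerivAt φ (⟪∇ f (z + t • v) - ∇ f z, v⟫_ℝ - L * ‖v‖ ^ 2 * t) t := by
    have line : HasDerivAt (fun t : ℝ => z + t • v) v t := by
      simpa using ((hasDerivAt_id t).smul_const v).const_add z
    have along_line :=
      (hf.differentiable (z + t • v)).hasGradientAt.hasFDerivAt.comp_hasDerivAt t line
    refine ((along_line.sub ((hasDerivAt_id t).mul_const ⟪∇ f z, v⟫_ℝ)).sub
      (((hasDerivAt_id t).pow 2).const_mul (L / 2 * ‖v‖ ^ 2))).congr_deriv ?_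
    simp only [toDual_apply_apply, inner_sub_left, id, Nat.cast_ofNat]
    ring
  have antitoneOn_φ : AntitoneOn φ (Set.Icc 0 1) := by
    refine antitoneOn_of_deriv_nonpos (convex_Icc 0 1)
      (fun t _ => (hasDerivAt_φ t).continuousAt.continuousWithinAt)
      (fun t _ => (hasDerivAt_φ t).differentiableAt.differentiableWithinAt) fun t ht => ?_
    rw [interior_Icc] at ht
    rw [(hasDerivAt_φ t).deriv]
    exact sub_nonpos.2 (hf.inner_gradient_sub_le z v ht.1.le)
  have φ_one_le_φ_zero : φ 1 ≤ φ 0 :=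
    antitoneOn_φ (Set.left_mem_Icc.2 zero_le_one) (Set.right_mem_Icc.2 zero_le_one) zero_le_one
  simp only [φ, one_smul, zero_smul, add_zero, one_mul, zero_mul, one_pow] at φ_one_le_φ_zero
  linarith

lemma sub_le_of_gradient_eq_zero (hf : LSmooth L f) {z : E} (hz : ∇ f z = 0) (y : E) :
    f y - f z ≤ L / 2 * ‖y - z‖ ^ 2 := by
  have taylor := hf.le_add_inner_add_sq z (y - z)
  rw [add_sub_cancel, hz, inner_zero_left] at taylor
  linarith

lemma norm_gradient_le_of_gradient_eq_zero (hf : LSmooth L f) {z : E} (hz : ∇ f z = 0) (y : E) :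
    ‖∇ f y‖ ≤ L * ‖y - z‖ := by
  simpa only [hz, sub_zero] using hf.norm_gradient_sub_le y z

lemma apply_sub_smul_le (hf : LSmooth L f) (α : ℝ) (z v : E) :
    f (z - α • v) ≤ f z - α / 2 * ‖∇ f z‖ ^ 2 - α / 2 * (1 - α * L) * ‖v‖ ^ 2
      + α / 2 * ‖v - ∇ f z‖ ^ 2 := by
  have taylor := hf.le_add_inner_add_sq z (-(α • v))
  have polarization := norm_sub_sq_real v (∇ f z)
  rw [real_inner_comm] at polarization
  rw [← sub_eq_add_neg, inner_neg_right, inner_smul_right, norm_neg, norm_smul, mul_pow,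
    Real.norm_eq_abs, sq_abs] at taylor
  rw [polarization]
  linarith

lemma mul_sum_sq_norm_gradient_le (hf : LSmooth L f) (hx : ∀ k, x (k + 1) = x k - α • g k)
    {m K : ℕ} (hmK : m ≤ K) :
    α * ∑ k ∈ Ico m K, ‖∇ f (x k)‖ ^ 2 ≤ 2 * (f (x m) - f (x K))
      - α * (1 - α * L) * ∑ k ∈ Ico m K, ‖g k‖ ^ 2
      + α * ∑ k ∈ Ico m K, ‖g k - ∇ f (x k)‖ ^ 2 := by
  have telescope : f (x m) - f (x K) = ∑ k ∈ Ico m K, (f (x k) - f (x (k + 1))) := by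
    rw [← neg_inj, neg_sub, ← sum_Ico_sub (fun k => f (x k)) hmK, ← sum_neg_distrib]
    simp only [neg_sub]
  rw [telescope]
  simp only [mul_sum, ← sum_sub_distrib, ← sum_add_distrib]
  refine sum_le_sum fun k _ => ?_
  have step := hf.apply_sub_smul_le α (x k) (g k)
  rw [← hx] at step
  linarith

lemma mul_sum_sq_norm_gradient_le_of_window_error (hf : LSmooth L f) {τ K : ℕ} (hτK : τ ≤ K)
    (hα : 0 ≤ α) (hαL : α * L + (α * L * τ) ^ 2 ≤ 1) (hx : ∀ k, x (k + 1) = x k - α • g k)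
    (herr : ∀ k ∈ Ico τ K, ‖g k - ∇ f (x k)‖ ≤ α * L * ∑ j ∈ Ico (k - τ) k, ‖g j‖) :
    α * ∑ k ∈ Ico τ K, ‖∇ f (x k)‖ ^ 2 ≤ 2 * (f (x τ) - f (x K))
      + α * ((α * L * τ) ^ 2 * ∑ k ∈ range τ, ‖g k‖ ^ 2) := by
  have error_le := sum_sq_le_of_le_mul_window_sum (fun k => norm_nonneg (g k - ∇ f (x k))) herr
  rw [← sum_range_add_sum_Ico _ hτK, mul_add] at error_le
  have absorb : (α * L * τ) ^ 2 * ∑ k ∈ Ico τ K, ‖g k‖ ^ 2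
      ≤ (1 - α * L) * ∑ k ∈ Ico τ K, ‖g k‖ ^ 2 := by
    gcongr
    linarith
  have excess_le : ∑ k ∈ Ico τ K, ‖g k - ∇ f (x k)‖ ^ 2 - (1 - α * L) * ∑ k ∈ Ico τ K, ‖g k‖ ^ 2
      ≤ (α * L * τ) ^ 2 * ∑ k ∈ range τ, ‖g k‖ ^ 2 := by linarith
  linarith [hf.mul_sum_sq_norm_gradient_le hx hτK, mul_le_mul_of_nonneg_left excess_le hα]

end LSmooth

end Smooth

/-- Staleness bounded by `τ` up to horizon `K`: at each iteration `k` with `τ ≤ k < K`, every index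
has been sampled during the preceding `τ` iterations. -/
def StalenessBounded {ι : Type*} (idx : ℕ → ι) (τ K : ℕ) : Prop :=
  ∀ i, ∀ k ∈ Ico τ K, ∃ j ∈ Ico (k - τ) k, idx j = i

variable {ι : Type*} [Fintype ι]

/-- The finite-sum objective `f = (1 / N) ∑ i, f_i`, where `N` is the number of components. -/
noncomputable def objective (F : ι → E → ℝ) (z : E) : ℝ := (∑ i, F i z) / Fintype.card ι

section Objective

variable {F : ι → E → ℝ}

lemma hasGradientAt_objective (hF : ∀ i, Differentiable ℝ (F i)) (z : E) :
    HasGradientAt (objective F) ((Fintype.card ι : ℝ)⁻¹ • ∑ i, ∇ (F i) z) z := by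
  have hsum : HasFDerivAt (fun y => ∑ i, F i y) (∑ i, toDual ℝ E (∇ (F i) z)) z :=
    HasFDerivAt.fun_sum fun i _ => (hF i z).hasGradientAt.hasFDerivAt
  rw [hasGradientAt_iff_hasFDerivAt]
  refine (hsum.mul_const (Fintype.card ι : ℝ)⁻¹).congr_fderiv ?_
  rw [map_smulₛₗ, map_sum, conj_trivial]

lemma gradient_objective (hF : ∀ i, Differentiable ℝ (F i)) (z : E) :
    ∇ (objective F) z = (Fintype.card ι : ℝ)⁻¹ • ∑ i, ∇ (F i) z :=
  (hasGradientAt_objective hF z).gradient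

lemma LSmooth.objective [Nonempty ι] {L : ℝ} (hF : ∀ i, LSmooth L (F i)) :
    LSmooth L (objective F) where
  differentiable z :=
    (hasGradientAt_objective (fun i => (hF i).differentiable) z).differentiableAt
  norm_gradient_sub_le y z := by
    simp only [gradient_objective fun i => (hF i).differentiable, ← smul_sub, ← sum_sub_distrib]
    exact norm_inv_card_smul_sum_le fun i => (hF i).norm_gradient_sub_le y z

end Objective

/-- Iterates `x`, directions `g` and stored gradients `h` of the incremental aggregated gradient
method on the components `F` with step size `α`: at iteration `k` the component `idx k` is sampled.
The starting point `x 0` is arbitrary, and `h i k` is the gradient stored for `i` before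
iteration `k`. -/
structure IsIAGRun [DecidableEq ι] (F : ι → E → ℝ) (idx : ℕ → ι) (α : ℝ) (x g : ℕ → E)
    (h : ι → ℕ → E) : Prop where
  stored_zero : ∀ i, h i 0 = 0
  stored_succ : ∀ i k, h i (k + 1) = if idx k = i then ∇ (F i) (x k) else h i k
  direction : ∀ k, g k = (Fintype.card ι : ℝ)⁻¹ • ∑ i, h i k
    + (Fintype.card ι : ℝ)⁻¹ • (∇ (F (idx k)) (x k) - h (idx k) k)
  iterate_succ : ∀ k, x (k + 1) = x k - α • g k

namespace IsIAGRun

variable [DecidableEq ι] {F : ι → E → ℝ} {idx : ℕ → ι} {α L B : ℝ} {x g : ℕ → E} {h : ι → ℕ → E}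
  {τ K : ℕ}

lemma direction_eq_mean_stored_succ (run : IsIAGRun F idx α x g h) (k : ℕ) :
    g k = (Fintype.card ι : ℝ)⁻¹ • ∑ i, h i (k + 1) := by
  have stored_succ_eq_add (i : ι) :
      h i (k + 1) = h i k + if idx k = i then ∇ (F i) (x k) - h i k else 0 := by
    rw [run.stored_succ]
    split_ifs <;> simp
  rw [run.direction, ← smul_add]
  simp only [stored_succ_eq_add, sum_add_distrib, sum_ite_eq, mem_univ, if_true]

lemma stored_eq_zero_or_exists_eq_gradient (run : IsIAGRun F idx α x g h) (i : ι) (k : ℕ) :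
    h i k = 0 ∨ ∃ j < k, h i k = ∇ (F i) (x j) := by
  induction k with
  | zero => exact .inl (run.stored_zero i)
  | succ k ih =>
    rw [run.stored_succ]
    split_ifs
    · exact .inr ⟨k, k.lt_succ_self, rfl⟩
    · exact ih.imp_right fun ⟨j, hjk, hj⟩ => ⟨j, hjk.trans k.lt_succ_self, hj⟩

lemma exists_stored_eq_gradient_of_sampled (run : IsIAGRun F idx α x g h) {i : ι} {j k : ℕ}
    (hjk : j < k) (hj : idx j = i) : ∃ l ∈ Ico j k, h i k = ∇ (F i) (x l) := by
  induction k, hjk using Nat.le_induction with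
  | base => exact ⟨j, by simp, by rw [run.stored_succ, if_pos hj]⟩
  | succ k hjk ih =>
    rw [run.stored_succ]
    split_ifs
    · exact ⟨k, mem_Ico.2 ⟨Nat.le_of_succ_le hjk, k.lt_succ_self⟩, rfl⟩
    · obtain ⟨l, hl, hstored⟩ := ih
      exact ⟨l, Ico_subset_Ico_right k.le_succ hl, hstored⟩

lemma norm_direction_sub_gradient_le (run : IsIAGRun F idx α x g h) (hF : ∀ i, LSmooth L (F i))
    (hL : 0 ≤ L) (hα : 0 ≤ α) (hidx : StalenessBounded idx τ K) {k : ℕ} (hk : k ∈ Ico τ K) :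
    ‖g k - ∇ (objective F) (x k)‖ ≤ α * L * ∑ j ∈ Ico (k - τ) k, ‖g j‖ := by
  have : Nonempty ι := ⟨idx 0⟩
  rw [run.direction_eq_mean_stored_succ, gradient_objective fun i => (hF i).differentiable,
    ← smul_sub, ← sum_sub_distrib]
  refine norm_inv_card_smul_sum_le fun i => ?_
  obtain ⟨j, hj, hji⟩ := hidx i k hk
  obtain ⟨hτj, hjk⟩ := mem_Ico.1 hj
  obtain ⟨l, hl, hstored⟩ := run.exists_stored_eq_gradient_of_sampled (hjk.trans k.lt_succ_self) hji
  obtain ⟨hjl, hlk⟩ := mem_Ico.1 hl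
  calc ‖h i (k + 1) - ∇ (F i) (x k)‖ ≤ L * ‖x l - x k‖ := by
        rw [hstored]
        exact (hF i).norm_gradient_sub_le (x l) (x k)
    _ ≤ L * (α * ∑ j ∈ Ico l k, ‖g j‖) := by
        gcongr
        exact norm_sub_le_mul_sum_Ico hα run.iterate_succ (Nat.le_of_lt_succ hlk)
    _ ≤ L * (α * ∑ j ∈ Ico (k - τ) k, ‖g j‖) := by
        gcongr
        exact hτj.trans hjl
    _ = α * L * ∑ j ∈ Ico (k - τ) k, ‖g j‖ := by ring

lemma norm_direction_le (run : IsIAGRun F idx α x g h) (hF : ∀ i, LSmooth L (F i)) (hL : 0 ≤ L)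
    {ξ : ι → E} (hξ : ∀ i, ∇ (F i) (ξ i) = 0) (hξB : ∀ i, ‖ξ i - x 0‖ ≤ B) {k : ℕ}
    (hxB : ∀ j ≤ k, ‖x j - x 0‖ ≤ B) : ‖g k‖ ≤ 2 * L * B := by
  have : Nonempty ι := ⟨idx 0⟩
  have hB : 0 ≤ B := (norm_nonneg _).trans (hξB (idx 0))
  rw [run.direction_eq_mean_stored_succ]
  refine norm_inv_card_smul_sum_le fun i => ?_
  obtain hstored | ⟨j, hj, hstored⟩ := run.stored_eq_zero_or_exists_eq_gradient i (k + 1)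
  · rw [hstored, norm_zero]
    positivity
  calc ‖h i (k + 1)‖ ≤ L * ‖x j - ξ i‖ := by
        rw [hstored]
        exact (hF i).norm_gradient_le_of_gradient_eq_zero (hξ i) (x j)
    _ ≤ L * (‖x j - x 0‖ + ‖ξ i - x 0‖) := by
        gcongr
        rw [norm_sub_rev (ξ i)]
        exact norm_sub_le_norm_sub_add_norm_sub _ _ _
    _ ≤ L * (B + B) := by
        gcongr
        exacts [hxB j (Nat.le_of_lt_succ hj), hξB i]
    _ = 2 * L * B := by ring

lemma norm_iterate_sub_le (run : IsIAGRun F idx α x g h) (hF : ∀ i, LSmooth L (F i)) (hL : 0 ≤ L)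
    (hα : 0 ≤ α) (hαL : α * L * τ ≤ 1 / 2) {ξ : ι → E} (hξ : ∀ i, ∇ (F i) (ξ i) = 0)
    (hξB : ∀ i, ‖ξ i - x 0‖ ≤ B) {k : ℕ} (hk : k ≤ τ) : ‖x k - x 0‖ ≤ B := by
  have hB : 0 ≤ B := (norm_nonneg _).trans (hξB (idx 0))
  induction k using Nat.strong_induction_on with
  | h k ih =>
    have direction_le : ∀ j ∈ Ico 0 k, ‖g j‖ ≤ 2 * L * B := fun j hj =>
      run.norm_direction_le hF hL hξ hξB fun l hlj =>
        have hlk : l < k := hlj.trans_lt (mem_Ico.1 hj).2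
        ih l hlk (hlk.le.trans hk)
    calc ‖x k - x 0‖ ≤ α * ∑ j ∈ Ico 0 k, ‖g j‖ := by
          rw [norm_sub_rev]
          exact norm_sub_le_mul_sum_Ico hα run.iterate_succ k.zero_le
      _ ≤ α * (k * (2 * L * B)) := by
          gcongr
          simpa using sum_le_card_nsmul _ _ _ direction_le
      _ ≤ α * (τ * (2 * L * B)) := by gcongr
      _ = 2 * B * (α * L * τ) := by ring
      _ ≤ 2 * B * (1 / 2) := by gcongr
      _ = B := by ring

lemma sum_sq_norm_direction_le (run : IsIAGRun F idx α x g h) (hF : ∀ i, LSmooth L (F i))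
    (hL : 0 ≤ L) (hα : 0 ≤ α) (hαL : α * L * τ ≤ 1 / 2) {ξ : ι → E}
    (hξ : ∀ i, ∇ (F i) (ξ i) = 0) (hξB : ∀ i, ‖ξ i - x 0‖ ≤ B) :
    ∑ k ∈ range τ, ‖g k‖ ^ 2 ≤ 4 * τ * L ^ 2 * B ^ 2 := by
  have direction_le : ∀ k ∈ range τ, ‖g k‖ ^ 2 ≤ (2 * L * B) ^ 2 := fun k hk =>
    pow_le_pow_left₀ (norm_nonneg _) (run.norm_direction_le hF hL hξ hξB fun _ hj =>
      run.norm_iterate_sub_le hF hL hα hαL hξ hξB (hj.trans (mem_range.1 hk).le)) 2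
  calc ∑ k ∈ range τ, ‖g k‖ ^ 2 ≤ τ * (2 * L * B) ^ 2 := by
        simpa using sum_le_card_nsmul _ _ _ direction_le
    _ = 4 * τ * L ^ 2 * B ^ 2 := by ring

lemma objective_sub_le (run : IsIAGRun F idx α x g h) (hF : ∀ i, LSmooth L (F i))
    (hL : 0 ≤ L) (hα : 0 ≤ α) (hαL : α * L * τ ≤ 1 / 2) {ξ : ι → E}
    (hξ : ∀ i, ∇ (F i) (ξ i) = 0) (hξB : ∀ i, ‖ξ i - x 0‖ ≤ B) {z : E}
    (hz : ∇ (objective F) z = 0) (hzB : ‖z - x 0‖ ≤ B) :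
    objective F (x τ) - objective F z ≤ 2 * L * B ^ 2 := by
  have : Nonempty ι := ⟨idx 0⟩
  have dist_le : ‖x τ - z‖ ≤ B + B :=
    calc ‖x τ - z‖ ≤ ‖x τ - x 0‖ + ‖x 0 - z‖ := norm_sub_le_norm_sub_add_norm_sub _ _ _
      _ ≤ B + B :=
        add_le_add (run.norm_iterate_sub_le hF hL hα hαL hξ hξB le_rfl) (norm_sub_rev z _ ▸ hzB)
  calc objective F (x τ) - objective F z ≤ L / 2 * ‖x τ - z‖ ^ 2 :=
        (LSmooth.objective hF).sub_le_of_gradient_eq_zero hz (x τ)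
    _ ≤ L / 2 * (B + B) ^ 2 := by gcongr
    _ = 2 * L * B ^ 2 := by ring

lemma mul_sum_sq_norm_gradient_le (run : IsIAGRun F idx α x g h) (hF : ∀ i, LSmooth L (F i))
    (hL : 0 ≤ L) (hα : 0 ≤ α) (hτ : 1 ≤ τ) (hτK : τ ≤ K) (hαL : α * L * τ ≤ 1 / 2)
    (hidx : StalenessBounded idx τ K) {ξ : ι → E} (hξ : ∀ i, ∇ (F i) (ξ i) = 0)
    (hξB : ∀ i, ‖ξ i - x 0‖ ≤ B) {z : E} (hz : ∀ y, objective F z ≤ objective F y)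
    (hzB : ‖z - x 0‖ ≤ B) :
    α * ∑ k ∈ Ico τ K, ‖∇ (objective F) (x k)‖ ^ 2 ≤ 4 * L * B ^ 2 + α * (τ * L ^ 2 * B ^ 2) := by
  have : Nonempty ι := ⟨idx 0⟩
  have αL_nonneg : 0 ≤ α * L := mul_nonneg hα hL
  have sq_le : (α * L * τ) ^ 2 ≤ 1 / 4 :=
    (pow_le_pow_left₀ (by positivity) hαL 2).trans_eq (by norm_num)
  have αL_le : α * L ≤ 1 / 2 :=
    (le_mul_of_one_le_right αL_nonneg (mod_cast hτ)).trans hαL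
  have decrease_le : objective F (x τ) - objective F (x K) ≤ 2 * L * B ^ 2 :=
    (sub_le_sub_left (hz _) _).trans
      (run.objective_sub_le hF hL hα hαL hξ hξB (gradient_eq_zero_of_forall_le hz) hzB)
  calc α * ∑ k ∈ Ico τ K, ‖∇ (objective F) (x k)‖ ^ 2
      ≤ 2 * (objective F (x τ) - objective F (x K))
        + α * ((α * L * τ) ^ 2 * ∑ k ∈ range τ, ‖g k‖ ^ 2) :=
        (LSmooth.objective hF).mul_sum_sq_norm_gradient_le_of_window_error hτK hα (by linarith)
          run.iterate_succ fun k hk => run.norm_direction_sub_gradient_le hF hL hα hidx hk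
    _ ≤ 2 * (2 * L * B ^ 2) + α * (1 / 4 * (4 * τ * L ^ 2 * B ^ 2)) := by
        gcongr
        exact run.sum_sq_norm_direction_le hF hL hα hαL hξ hξB
    _ = 4 * L * B ^ 2 + α * (τ * L ^ 2 * B ^ 2) := by ring

end IsIAGRun

theorem iag_nonconvex_general [DecidableEq ι] {F : ι → E → ℝ} {idx : ℕ → ι} {α L B : ℝ}
    {x g : ℕ → E} {h : ι → ℕ → E} {τ K : ℕ} (run : IsIAGRun F idx α x g h)
    (hF : ∀ i, LSmooth L (F i)) (hL : 0 < L) (hτ : 1 ≤ τ) (hK : 2 * τ ≤ K)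
    (hα : α = 1 / (16 * L * τ)) (hidx : StalenessBounded idx τ K)
    {ξ : ι → E} (hξ : ∀ i, ∇ (F i) (ξ i) = 0) (hξB : ∀ i, ‖ξ i - x 0‖ ≤ B)
    {z : E} (hz : ∀ y, objective F z ≤ objective F y) (hzB : ‖z - x 0‖ ≤ B) :
    ((K : ℝ) - τ)⁻¹ * ∑ k ∈ Ico τ K, ‖∇ (objective F) (x k)‖ ^ 2
      ≤ 130 * L ^ 2 * B ^ 2 * τ / K := by
  have hτ_pos : (0 : ℝ) < τ := mod_cast hτ
  have hK_cast : 2 * (τ : ℝ) ≤ K := mod_cast hK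
  have hα_pos : 0 < α := by rw [hα]; positivity
  have hαL : α * L * τ = 1 / 16 := by rw [hα]; field_simp
  have sum_le : ∑ k ∈ Ico τ K, ‖∇ (objective F) (x k)‖ ^ 2 ≤ 65 * (τ * L ^ 2 * B ^ 2) := by
    refine le_of_mul_le_mul_left ?_ hα_pos
    refine (run.mul_sum_sq_norm_gradient_le hF hL.le hα_pos.le hτ (by omega) (by linarith) hidx
      hξ hξB hz hzB).trans_eq ?_
    linear_combination -64 * L * B ^ 2 * hαL
  rw [inv_mul_le_iff₀ (by linarith), ← mul_div_assoc, le_div_iff₀ (by linarith)]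
  calc (∑ k ∈ Ico τ K, ‖∇ (objective F) (x k)‖ ^ 2) * K
      ≤ 65 * (τ * L ^ 2 * B ^ 2) * (2 * (K - τ)) := by
        gcongr
        linarith
    _ = (K - τ) * (130 * L ^ 2 * B ^ 2 * τ) := by ring

/- STATEMENT 18 (IAG, non-convex case, deterministic). -/
theorem iag_nonconvex (d N : ℕ) (hd : 1 ≤ d) (hN : 1 ≤ N)
    (L : ℝ) (hL : 0 < L)
    (fi : Fin N → EuclideanSpace ℝ (Fin d) → ℝ)
    (hdiff : ∀ i, Differentiable ℝ (fi i))
    (hsmooth : ∀ i x y, ‖gradient (fi i) x - gradient (fi i) y‖ ≤ L * ‖x - y‖)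
    (f : EuclideanSpace ℝ (Fin d) → ℝ)
    (hf : ∀ z, f z = (∑ i, fi i z) / N)
    (xstar : EuclideanSpace ℝ (Fin d)) (hmin : ∀ y, f xstar ≤ f y)
    (xistar : Fin N → EuclideanSpace ℝ (Fin d))
    (hxi : ∀ i y, fi i (xistar i) ≤ fi i y)
    (B : ℝ) (hB : B = max ‖xstar‖ (⨆ i, ‖xistar i‖))
    (τ K : ℕ) (hτ : 1 ≤ τ) (hK : 2 * τ ≤ K)
    (idx : ℕ → Fin N) (α : ℝ) (hα : α = 1 / (16 * L * τ))
    (x g : ℕ → EuclideanSpace ℝ (Fin d))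
    (h : Fin N → ℕ → EuclideanSpace ℝ (Fin d))
    (hx0 : x 0 = 0)
    (hh0 : ∀ i, h i 0 = 0)
    (hhrec : ∀ i k, h i (k + 1) = if idx k = i then gradient (fi i) (x k) else h i k)
    (hg : ∀ k, g k = (N : ℝ)⁻¹ • (∑ i, h i k)
      + (N : ℝ)⁻¹ • (gradient (fi (idx k)) (x k) - h (idx k) k))
    (hxrec : ∀ k, x (k + 1) = x k - α • g k)
    (hstale : ∀ i : Fin N, ∀ k : ℕ, τ ≤ k → k ≤ K - 1 →
      ∃ j : ℕ, k - τ ≤ j ∧ j < k ∧ idx j = i) :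
    ((K : ℝ) - τ)⁻¹ * ∑ k ∈ Finset.Ico τ K, ‖gradient f (x k)‖ ^ 2 ≤
      768 * L ^ 2 * B ^ 2 * τ / K := by
  obtain rfl : f = objective fi := funext fun z => by rw [hf, objective, Fintype.card_fin]
  have run : IsIAGRun fi idx α x g h :=
    ⟨hh0, hhrec, by simpa only [Fintype.card_fin] using hg, hxrec⟩
  have hidx : StalenessBounded idx τ K := fun i k hk => by
    obtain ⟨hτk, hkK⟩ := Finset.mem_Ico.1 hk
    simpa only [Finset.mem_Ico, and_assoc] using hstale i k hτk (Nat.le_sub_one_of_lt hkK)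
  have hxiB (i : Fin N) : ‖xistar i - x 0‖ ≤ B := by
    rw [hx0, sub_zero, hB]
    exact (le_ciSup (Set.finite_range fun i => ‖xistar i‖).bddAbove i).trans (le_max_right _ _)
  have hxstarB : ‖xstar - x 0‖ ≤ B := by rw [hx0, sub_zero, hB]; exact le_max_left _ _
  refine (iag_nonconvex_general run (fun i => ⟨hdiff i, hsmooth i⟩) hL hτ hK hα hidx
    (fun i => gradient_eq_zero_of_forall_le (hxi i)) hxiB hmin hxstarB).trans ?_
  gcongr
  norm_num
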